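/- Let Ω be a nonempty finite set, p a full-support probability vector on Ω, n ≥ 1, and for each ω ∈ Ω let v^ω : Δ(Ω)^n → ℝ be continuous. Say that a family of continuous functions u^ω : Δ(Ω)^n → ℝ (ω ∈ Ω) makes non-revealing optimal for any prior if, for every full-support probability vector q on Ω and every feasible collection (μ^ω)_{ω∈Ω} for prior q, one has ∑_{ω∈Ω} q(ω)·∫ u^ω dμ^ω ≤ ∑_{ω∈Ω} q(ω)·u^ω(q,…,q). Then the value Val of the persuasion problem with utilities (v^ω) and prior p equals the minimum, over all families of continuous functions u^ω with v^ω(x_1,…,x_n) ≤ u^ω(x_1,…,x_n) for all ω and all (x_1,…,x_n) and which make non-revealing optimal for any prior, of ∑_{ω∈Ω} p(ω)·u^ω(p,…,p); moreover the minimum is attained. -/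

import Mathlib

open MeasureTheory

noncomputable section

abbrev Belief (Ω : Type) [Fintype Ω] : Type := stdSimplex ℝ Ω

variable {Ω : Type} [Fintype Ω] [MeasurableSpace Ω] [MeasurableSingletonClass Ω]

/-- The joint distribution of state and beliefs. -/
def jointP (p : Ω → ℝ) {X : Type} [MeasurableSpace X] (μ : Ω → Measure X) :
    Measure (Ω × X) :=
  ∑ ω : Ω, ENNReal.ofReal (p ω) • ((Measure.dirac ω).prod (μ ω))

/-- Feasibility of a collection of conditional belief distributions, n receivers. -/
def Feasible (p : Ω → ℝ) (n : ℕ) (μ : Ω → Measure (Fin n → Belief Ω)) : Prop :=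
  (∀ ω, IsProbabilityMeasure (μ ω)) ∧
  ∀ (i : Fin n) (ω' : Ω),
    (fun z : Ω × (Fin n → Belief Ω) => (z.2 i).1 ω')
      =ᵐ[jointP p μ]
      (jointP p μ)[Set.indicator {z : Ω × (Fin n → Belief Ω) | z.1 = ω'} (fun _ => (1 : ℝ)) |
        MeasurableSpace.comap (fun z : Ω × (Fin n → Belief Ω) => z.2 i) inferInstance]

/-- Feasibility of a collection of conditional belief distributions, single receiver. -/
def Feasible1 (p : Ω → ℝ) (lam : Ω → Measure (Belief Ω)) : Prop :=
  (∀ ω, IsProbabilityMeasure (lam ω)) ∧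
  ∀ ω' : Ω,
    (fun z : Ω × Belief Ω => (z.2).1 ω')
      =ᵐ[jointP p lam]
      (jointP p lam)[Set.indicator {z : Ω × Belief Ω | z.1 = ω'} (fun _ => (1 : ℝ)) |
        MeasurableSpace.comap (fun z : Ω × Belief Ω => z.2) inferInstance]

/-- the value of the persuasion problem -/
def Val (p : Ω → ℝ) (n : ℕ) (v : Ω → (Fin n → Belief Ω) → ℝ) : ℝ :=
  sSup { r | ∃ μ : Ω → Measure (Fin n → Belief Ω),
    Feasible p n μ ∧ r = ∑ ω : Ω, p ω * ∫ x, v ω x ∂(μ ω) }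

end

open Set Filter Topology

section MeasurePart

set_option linter.unusedSectionVars false

variable {Ω : Type} [Fintype Ω] [MeasurableSpace Ω] [MeasurableSingletonClass Ω]

lemma jointP_finite (p : Ω → ℝ) {X : Type} [MeasurableSpace X] (μ : Ω → Measure X)
    [∀ ω, IsProbabilityMeasure (μ ω)] : IsFiniteMeasure (jointP p μ) := by
  unfold jointP
  have : ∀ ω, IsFiniteMeasure (ENNReal.ofReal (p ω) • ((Measure.dirac ω).prod (μ ω))) := by
    intro ω
    exact Measure.smul_finite _ ENNReal.ofReal_ne_top
  infer_instance

lemma integral_jointP (p : Ω → ℝ) (hp : ∀ ω, 0 ≤ p ω) {X : Type} [MeasurableSpace X]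
    (μ : Ω → Measure X) [∀ ω, IsProbabilityMeasure (μ ω)] (h : Ω × X → ℝ) (hm : Measurable h)
    (C : ℝ) (hC : ∀ z, |h z| ≤ C) :
    ∫ z, h z ∂(jointP p μ) = ∑ ω, p ω * ∫ x, h (ω, x) ∂(μ ω) := by
  unfold jointP
  rw [integral_finsetSum_measure]
  · refine Finset.sum_congr rfl fun ω _ => ?_
    rw [integral_smul_measure, ENNReal.toReal_ofReal (hp ω), Measure.dirac_prod,
      integral_map measurable_prodMk_left.aemeasurable hm.aestronglyMeasurable, smul_eq_mul]
  · intro ω _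
    have : IsFiniteMeasure (ENNReal.ofReal (p ω) • ((Measure.dirac ω).prod (μ ω))) :=
      Measure.smul_finite _ ENNReal.ofReal_ne_top
    exact Integrable.of_bound hm.aestronglyMeasurable C (ae_of_all _ hC)

lemma belief_abs_le (b : Belief Ω) (ω : Ω) : |b.1 ω| ≤ 1 := by
  rw [abs_of_nonneg (b.2.1 ω), ← b.2.2]
  exact Finset.single_le_sum (fun i _ => b.2.1 i) (Finset.mem_univ ω)

lemma exists_bound {X : Type} [TopologicalSpace X] [CompactSpace X] (f : X → ℝ)
    (hf : Continuous f) : ∃ C, 0 ≤ C ∧ ∀ x, |f x| ≤ C := by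
  refine ⟨‖(⟨f, hf⟩ : C(X, ℝ))‖, norm_nonneg _, fun x => ?_⟩
  exact ContinuousMap.norm_coe_le_norm (⟨f, hf⟩ : C(X, ℝ)) x

lemma indicator_meas {n : ℕ} (ω' : Ω) : MeasurableSet
    {z : Ω × (Fin n → Belief Ω) | z.1 = ω'} :=
  measurable_fst (measurableSet_singleton ω')

lemma meas_coord {n : ℕ} (i : Fin n) :
    Measurable (fun z : Ω × (Fin n → Belief Ω) => z.2 i) :=
  (measurable_pi_apply i).comp measurable_snd

lemma meas_eval (ω' : Ω) : Measurable (fun b : Belief Ω => b.1 ω') :=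
  (measurable_pi_apply ω').comp measurable_subtype_coe

lemma integral_ind (p : Ω → ℝ) (hp : ∀ ω, 0 ≤ p ω) {n : ℕ} (μ : Ω → Measure (Fin n → Belief Ω))
    [∀ ω, IsProbabilityMeasure (μ ω)] (f : Belief Ω → ℝ) (hf : Continuous f) (i : Fin n) (ω' : Ω) :
    ∫ z, f (z.2 i) * indicator {z : Ω × (Fin n → Belief Ω) | z.1 = ω'} (fun _ => (1 : ℝ)) z
      ∂(jointP p μ) = p ω' * ∫ x, f (x i) ∂(μ ω') := by
  classical
  obtain ⟨C, hC0, hC⟩ := exists_bound f hf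
  rw [integral_jointP p hp μ _ ?_ C ?_]
  · rw [Finset.sum_eq_single ω']
    · simp
    · intro ω _ hne
      simp [indicator, hne]
    · simp
  · exact (hf.measurable.comp (meas_coord i)).mul (measurable_const.indicator (indicator_meas ω'))
  · intro z
    by_cases hz : z.1 = ω' <;> simp [indicator, hz, hC, hC0]

lemma integral_den (p : Ω → ℝ) (hp : ∀ ω, 0 ≤ p ω) {n : ℕ} (μ : Ω → Measure (Fin n → Belief Ω))
    [∀ ω, IsProbabilityMeasure (μ ω)] (f : Belief Ω → ℝ) (hf : Continuous f) (i : Fin n) (ω' : Ω) :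
    ∫ z, f (z.2 i) * (z.2 i).1 ω' ∂(jointP p μ) =
      ∑ ω, p ω * ∫ x, f (x i) * (x i).1 ω' ∂(μ ω) := by
  obtain ⟨C, hC0, hC⟩ := exists_bound f hf
  rw [integral_jointP p hp μ _ ?_ C ?_]
  · exact (hf.measurable.comp (meas_coord i)).mul ((meas_eval ω').comp (meas_coord i))
  · intro z
    rw [abs_mul]
    calc _ ≤ C * 1 := mul_le_mul (hC _) (belief_abs_le _ _) (abs_nonneg _) hC0
      _ = C := mul_one C

/-- Moment form of feasibility, direct direction. -/
lemma feasible_test (p : Ω → ℝ) (hp : ∀ ω, 0 ≤ p ω) {n : ℕ} (μ : Ω → Measure (Fin n → Belief Ω))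
    (h : Feasible p n μ) (f : Belief Ω → ℝ) (hf : Continuous f) (i : Fin n) (ω' : Ω) :
    ∑ ω, p ω * ∫ x, f (x i) * (x i).1 ω' ∂(μ ω) = p ω' * ∫ x, f (x i) ∂(μ ω') := by
  have hprob := h.1
  have hfin := jointP_finite p μ
  rw [← integral_den p hp μ f hf, ← integral_ind p hp μ f hf]
  obtain ⟨C, hC0, hC⟩ := exists_bound f hf
  have hm := (meas_coord (Ω := Ω) i).comap_le
  have hindm : Measurable (indicator {z : Ω × (Fin n → Belief Ω) | z.1 = ω'} (fun _ => (1 : ℝ))) :=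
    measurable_const.indicator (indicator_meas ω')
  set m := MeasurableSpace.comap (fun z : Ω × (Fin n → Belief Ω) => z.2 i) inferInstance with hmdef
  set ind := indicator {z : Ω × (Fin n → Belief Ω) | z.1 = ω'} (fun _ => (1 : ℝ)) with hind
  have hfm : Measurable[m] (fun z : Ω × (Fin n → Belief Ω) => f (z.2 i)) :=
    hf.measurable.comp (comap_measurable _)
  have hindb : ∀ z, |ind z| ≤ 1 := by
    intro z
    by_cases hz : z.1 = ω' <;> simp [ind, indicator, hz]
  have hi1 : Integrable ind (jointP p μ) :=
    Integrable.of_bound hindm.aestronglyMeasurable 1 (ae_of_all _ hindb)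
  have hi2 : Integrable ((fun z : Ω × (Fin n → Belief Ω) => f (z.2 i)) * ind) (jointP p μ) := by
    refine Integrable.of_bound ((hfm.mono hm le_rfl).mul hindm).aestronglyMeasurable C
      (ae_of_all _ fun z => ?_)
    rw [Pi.mul_apply, Real.norm_eq_abs, abs_mul]
    calc _ ≤ C * 1 := mul_le_mul (hC _) (hindb _) (abs_nonneg _) hC0
      _ = C := mul_one C
  have key := condExp_mul_of_stronglyMeasurable_left (m := m) hfm.stronglyMeasurable hi2 hi1
  have e1 := integral_condExp (μ := jointP p μ) hm
    (f := (fun z : Ω × (Fin n → Belief Ω) => f (z.2 i)) * ind)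
  refine Eq.trans ?_ e1
  refine integral_congr_ae ?_
  filter_upwards [key, h.2 i ω'] with z h1 h2
  rw [h1, Pi.mul_apply, ← h2]

/-- Moment form of feasibility, converse direction. -/
lemma feasible_of_test (p : Ω → ℝ) (hp : ∀ ω, 0 ≤ p ω) {n : ℕ}
    (μ : Ω → Measure (Fin n → Belief Ω)) (hprob : ∀ ω, IsProbabilityMeasure (μ ω))
    (h : ∀ (f : Belief Ω → ℝ), Continuous f → ∀ (i : Fin n) (ω' : Ω),
      ∑ ω, p ω * ∫ x, f (x i) * (x i).1 ω' ∂(μ ω) = p ω' * ∫ x, f (x i) ∂(μ ω')) :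
    Feasible p n μ := by
  refine ⟨hprob, fun i ω' => ?_⟩
  have hfin := jointP_finite p μ
  have hm := (meas_coord (Ω := Ω) i).comap_le
  have hgm : Measurable (fun z : Ω × (Fin n → Belief Ω) => (z.2 i).1 ω') :=
    (meas_eval ω').comp (meas_coord i)
  have hgi : Integrable (fun z : Ω × (Fin n → Belief Ω) => (z.2 i).1 ω') (jointP p μ) :=
    Integrable.of_bound hgm.aestronglyMeasurable 1 (ae_of_all _ fun z => belief_abs_le _ _)
  have hindm : Measurable (indicator {z : Ω × (Fin n → Belief Ω) | z.1 = ω'} (fun _ => (1 : ℝ))) :=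
    measurable_const.indicator (indicator_meas ω')
  have hindi : Integrable (indicator {z : Ω × (Fin n → Belief Ω) | z.1 = ω'} (fun _ => (1 : ℝ)))
      (jointP p μ) :=
    (integrable_const 1).indicator (indicator_meas ω')
  have hind0 : ∀ z, 0 ≤ indicator {z : Ω × (Fin n → Belief Ω) | z.1 = ω'} (fun _ => (1 : ℝ)) z :=
    fun z => indicator_nonneg (fun _ _ => zero_le_one) z
  -- generic facts on push-forwards of weighted measures
  have gen : ∀ g : Ω × (Fin n → Belief Ω) → ℝ, Measurable g → Integrable g (jointP p μ) →
      (∀ z, 0 ≤ g z) →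
      IsFiniteMeasure (((jointP p μ).withDensity (fun z => ((g z).toNNReal : ENNReal))).map
        (fun z => z.2 i)) ∧
      (∀ f : Belief Ω → ℝ, Measurable f →
        ∫ b, f b ∂(((jointP p μ).withDensity (fun z => ((g z).toNNReal : ENNReal))).map
        (fun z => z.2 i)) = ∫ z, f (z.2 i) * g z ∂(jointP p μ)) := by
    intro g hg hgint hg0
    constructor
    · have : IsFiniteMeasure ((jointP p μ).withDensity (fun z => ((g z).toNNReal : ENNReal))) :=
        isFiniteMeasure_withDensity_ofReal hgint.2
      infer_instance
    · intro f hf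
      rw [integral_map (meas_coord i).aemeasurable hf.aestronglyMeasurable,
        integral_withDensity_eq_integral_smul hg.real_toNNReal]
      refine integral_congr_ae (ae_of_all _ fun z => ?_)
      simp only [NNReal.smul_def, Real.coe_toNNReal _ (hg0 z), smul_eq_mul]
      ring
  obtain ⟨f1, g1⟩ := gen _ hgm hgi (fun z => (z.2 i).2.1 ω')
  obtain ⟨f2, g2⟩ := gen _ hindm hindi hind0
  have heq : ((jointP p μ).withDensity
        (fun z => (((z.2 i).1 ω').toNNReal : ENNReal))).map (fun z => z.2 i) =
      ((jointP p μ).withDensity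
        (fun z => ((indicator {z : Ω × (Fin n → Belief Ω) | z.1 = ω'}
          (fun _ => (1 : ℝ)) z).toNNReal : ENNReal))).map (fun z => z.2 i) := by
    refine ext_of_forall_integral_eq_of_IsFiniteMeasure (fun f => ?_)
    rw [g1 f f.continuous.measurable, g2 f f.continuous.measurable,
      integral_den p hp μ f f.continuous, integral_ind p hp μ f f.continuous]
    exact h f f.continuous i ω'
  refine ae_eq_condExp_of_forall_setIntegral_eq hm hindi (fun s _ _ => hgi.integrableOn) ?_ ?_
  · rintro s ⟨B, hB, rfl⟩ -
    have hB' : MeasurableSet ((fun z : Ω × (Fin n → Belief Ω) => z.2 i) ⁻¹' B) := meas_coord i hB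
    have a1 := g1 (B.indicator fun _ => 1) (measurable_const.indicator hB)
    have a2 := g2 (B.indicator fun _ => 1) (measurable_const.indicator hB)
    rw [heq, a2] at a1
    rw [← integral_indicator hB', ← integral_indicator hB']
    convert a1.symm using 2
    · ext z
      by_cases hz : z.2 i ∈ B <;> simp [indicator, hz]
    · ext z
      by_cases hz : z.2 i ∈ B <;> simp [indicator, hz]
  · exact ((meas_eval ω').comp (comap_measurable _)).aestronglyMeasurable

end MeasurePart

section DualPart

variable {Ω : Type} [Fintype Ω]

/-- Feasible points of the dual problem. -/
def DualOK {n : ℕ} (v : Ω → (Fin n → Belief Ω) → ℝ) (V : Ω → ℝ)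
    (β : Fin n → Ω → Belief Ω → ℝ) : Prop :=
  (∀ ω x, v ω x ≤ V ω + ∑ i, β i ω (x i)) ∧ ∀ i (b : Belief Ω), ∑ ω, b.1 ω * β i ω b ≤ 0

/-- The function `β i` inherits the modulus of continuity of `v` in the `i`-th coordinate. -/
def ModAt {n : ℕ} (v : Ω → (Fin n → Belief Ω) → ℝ)
    (β : Fin n → Ω → Belief Ω → ℝ) (i : Fin n) : Prop :=
  ∀ ω a b c, (∀ x, |v ω (Function.update x i a) - v ω (Function.update x i b)| ≤ c) →
    β i ω a - β i ω b ≤ c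

lemma regularize [Nonempty (Belief Ω)] {n : ℕ} (v : Ω → (Fin n → Belief Ω) → ℝ) (V : Ω → ℝ)
    (β : Fin n → Ω → Belief Ω → ℝ) (h : DualOK v V β) (s : Finset (Fin n)) :
    ∃ β', DualOK v V β' ∧ ∀ i ∈ s, ModAt v β' i := by
  classical
  induction s using Finset.induction_on with
  | empty => exact ⟨β, h, by simp⟩
  | insert i s his ih =>
    obtain ⟨β, hβ, hmod⟩ := ih
    set F : Ω → Belief Ω → (Fin n → Belief Ω) → ℝ := fun ω a x =>
      v ω (Function.update x i a) - V ω - ∑ j ∈ Finset.univ.erase i, β j ω (x j) with hF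
    have hFle : ∀ ω a x, F ω a x ≤ β i ω a := by
      intro ω a x
      have h1 := hβ.1 ω (Function.update x i a)
      rw [← Finset.add_sum_erase _ _ (Finset.mem_univ i)] at h1
      have h2 : ∑ j ∈ Finset.univ.erase i, β j ω (Function.update x i a j) =
          ∑ j ∈ Finset.univ.erase i, β j ω (x j) := by
        refine Finset.sum_congr rfl fun j hj => ?_
        rw [Function.update_of_ne (Finset.ne_of_mem_erase hj)]
      rw [h2, Function.update_self] at h1
      simp only [hF]
      linarith
    have hbdd : ∀ ω a, BddAbove (Set.range (F ω a)) := by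
      intro ω a
      refine ⟨β i ω a, ?_⟩
      rintro _ ⟨x, rfl⟩
      exact hFle ω a x
    refine ⟨Function.update β i (fun ω a => ⨆ x, F ω a x), ⟨?_, ?_⟩, ?_⟩
    · intro ω x
      rw [← Finset.add_sum_erase _ _ (Finset.mem_univ i), Function.update_self]
      have h2 : ∑ j ∈ Finset.univ.erase i,
          Function.update β i (fun ω a => ⨆ x, F ω a x) j ω (x j) =
          ∑ j ∈ Finset.univ.erase i, β j ω (x j) := by
        refine Finset.sum_congr rfl fun j hj => ?_
        rw [Function.update_of_ne (Finset.ne_of_mem_erase hj)]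
      rw [h2]
      have h3 := le_ciSup (hbdd ω (x i)) x
      simp only [hF, Function.update_eq_self] at h3 ⊢
      linarith
    · intro j b
      by_cases hj : j = i
      · subst hj
        rw [Function.update_self]
        refine le_trans (Finset.sum_le_sum fun ω _ => ?_) (hβ.2 j b)
        exact mul_le_mul_of_nonneg_left (ciSup_le fun x => hFle ω b x) (b.2.1 ω)
      · rw [Function.update_of_ne hj]
        exact hβ.2 j b
    · intro j hj
      by_cases hji : j = i
      · subst hji
        intro ω a b c hc
        rw [Function.update_self]
        have : (⨆ x, F ω a x) ≤ (⨆ x, F ω b x) + c := by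
          refine ciSup_le fun x => ?_
          have h3 := le_ciSup (hbdd ω b) x
          have h4 := (abs_le.1 (hc x)).2
          simp only [hF] at h3 ⊢
          linarith
        linarith
      · intro ω a b c hc
        rw [Function.update_of_ne hji]
        exact hmod j ((Finset.mem_insert.1 hj).resolve_left hji) ω a b c hc

lemma dual_bounds (p : Ω → ℝ) (hp : ∀ ω, 0 < p ω) (hpsum : ∑ ω, p ω = 1) {n : ℕ}
    (v : Ω → (Fin n → Belief Ω) → ℝ) (M : ℝ) (hM0 : 0 ≤ M) (hM : ∀ ω x, |v ω x| ≤ M) (D : ℝ) :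
    ∃ B : Ω → ℝ, ∀ (V : Ω → ℝ) (β : Fin n → Ω → Belief Ω → ℝ), DualOK v V β →
      (∀ i, ModAt v β i) → ∑ ω, p ω * V ω ≤ D →
      (∀ ω, |V ω| ≤ B ω) ∧ ∀ i ω b, |β i ω b| ≤ B ω := by
  classical
  set K := M + n * (2 * M) with hK
  have hnM : 0 ≤ n * (2 * M) := by positivity
  have hK0 : 0 ≤ K := by positivity
  refine ⟨fun ω => K + |(D + K) / p ω|, fun V β hβ hmod hD => ?_⟩
  have hosc : ∀ i ω a b, β i ω a - β i ω b ≤ 2 * M := by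
    intro i ω a b
    refine hmod i ω a b _ fun x => ?_
    have h1 := abs_le.1 (hM ω (Function.update x i a))
    have h2 := abs_le.1 (hM ω (Function.update x i b))
    rw [abs_le]
    constructor <;> linarith
  have hup : ∀ i ω b, β i ω b ≤ 2 * M := by
    intro i ω b
    let d : Belief Ω := ⟨Pi.single ω 1, single_mem_stdSimplex ℝ ω⟩
    have h1 := hβ.2 i d
    have h2 : ∑ ω', d.1 ω' * β i ω' d = β i ω d := by
      rw [Finset.sum_eq_single ω]
      · simp [d]
      · intro ω' _ hne
        simp [d, Pi.single_apply, hne]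
      · simp
    have h3 := hosc i ω b d
    linarith
  have hVlow : ∀ ω, -K ≤ V ω := by
    intro ω
    let x : Fin n → Belief Ω := fun _ => ⟨p, fun ω => (hp ω).le, hpsum⟩
    have h1 := hβ.1 ω x
    have h2 : ∑ i, β i ω (x i) ≤ n * (2 * M) := by
      refine le_trans (Finset.sum_le_sum fun i _ => hup i ω (x i)) ?_
      simp
    have h3 := (abs_le.1 (hM ω x)).1
    linarith
  have hVup : ∀ ω, V ω ≤ (D + K) / p ω := by
    intro ω
    rw [le_div_iff₀ (hp ω)]
    have h1 : p ω * (V ω + K) ≤ ∑ ω', p ω' * (V ω' + K) :=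
      Finset.single_le_sum (f := fun ω' => p ω' * (V ω' + K))
        (fun ω' _ => mul_nonneg (hp ω').le (by linarith [hVlow ω'])) (Finset.mem_univ ω)
    have h2 : ∑ ω', p ω' * (V ω' + K) = ∑ ω', p ω' * V ω' + K := by
      simp only [mul_add, Finset.sum_add_distrib, ← Finset.sum_mul, hpsum, one_mul]
    have h3 := mul_nonneg (hp ω).le hK0
    linarith
  constructor
  · intro ω
    have h1 := hVup ω
    have h2 := hVlow ω
    have h3 := le_abs_self ((D + K) / p ω)
    have h4 := abs_nonneg ((D + K) / p ω)
    rw [abs_le]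
    constructor <;> linarith
  · intro i ω b
    have h1 := hVup ω
    have h2 := hVlow ω
    have h3 := le_abs_self ((D + K) / p ω)
    have h4 := abs_nonneg ((D + K) / p ω)
    have h5 := hβ.1 ω (fun _ => b)
    rw [← Finset.add_sum_erase _ _ (Finset.mem_univ i)] at h5
    have h6 : ∑ j ∈ Finset.univ.erase i, β j ω b ≤ n * (2 * M) := by
      refine le_trans (Finset.sum_le_sum fun i _ => hup i ω b) ?_
      rw [Finset.sum_const, nsmul_eq_mul]
      refine mul_le_mul_of_nonneg_right ?_ (by positivity)
      have := Finset.card_le_univ (Finset.univ.erase i)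
      rw [Fintype.card_fin] at this
      exact_mod_cast this
    have h7 := (abs_le.1 (hM ω (fun _ => b))).1
    have h8 := hup i ω b
    have h9 : 2 * M ≤ n * (2 * M) := by
      have : (1 : ℝ) ≤ n := by exact_mod_cast (Nat.one_le_of_lt i.2)
      nlinarith
    rw [abs_le]
    constructor <;> linarith

lemma modAt_continuous {n : ℕ} (v : Ω → (Fin n → Belief Ω) → ℝ) (hv : ∀ ω, Continuous (v ω))
    (β : Fin n → Ω → Belief Ω → ℝ) (i : Fin n) (h : ModAt v β i) (ω : Ω) :
    Continuous (β i ω) := by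
  have huc := CompactSpace.uniformContinuous_of_continuous (hv ω)
  rw [Metric.continuous_iff]
  intro b ε hε
  obtain ⟨δ, hδ, H⟩ := Metric.uniformContinuous_iff.1 huc (ε / 2) (by positivity)
  refine ⟨δ, hδ, fun a hab => ?_⟩
  have key : ∀ a b : Belief Ω, dist a b < δ → β i ω a - β i ω b ≤ ε / 2 := by
    intro a b hab
    refine h ω a b _ fun x => ?_
    rw [← Real.dist_eq]
    refine (H ?_).le
    refine (dist_pi_lt_iff hδ).2 fun j => ?_
    by_cases hj : j = i
    · subst hj; simpa using hab
    · simpa [Function.update_of_ne hj] using hδ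
  have h1 := key a b hab
  have h2 := key b a (by rwa [dist_comm])
  rw [Real.dist_eq, abs_lt]
  constructor <;> linarith

lemma dual_attain (p : Ω → ℝ) (hp : ∀ ω, 0 < p ω) (hpsum : ∑ ω, p ω = 1) {n : ℕ}
    (v : Ω → (Fin n → Belief Ω) → ℝ) (hv : ∀ ω, Continuous (v ω)) (d : ℝ)
    (h : ∀ ε : ℝ, 0 < ε → ∃ V β, DualOK v V β ∧ ∑ ω, p ω * V ω ≤ d + ε) :
    ∃ V β, DualOK v V β ∧ (∀ i ω, Continuous (β i ω)) ∧ ∑ ω, p ω * V ω ≤ d := by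
  have hne : Nonempty (Belief Ω) := ⟨⟨p, fun ω => (hp ω).le, hpsum⟩⟩
  have hM : ∃ M : ℝ, 0 ≤ M ∧ ∀ ω x, |v ω x| ≤ M := by
    choose C hC0 hC using fun ω => exists_bound (v ω) (hv ω)
    refine ⟨∑ ω, C ω, Finset.sum_nonneg fun ω _ => hC0 ω, fun ω x => (hC ω x).trans ?_⟩
    exact Finset.single_le_sum (fun ω _ => hC0 ω) (Finset.mem_univ ω)
  obtain ⟨M, hM0, hM⟩ := hM
  obtain ⟨B, hB⟩ := dual_bounds p hp hpsum v M hM0 hM (d + 1)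
  have h' : ∀ k : ℕ, ∃ V β, DualOK v V β ∧ (∀ i, ModAt v β i) ∧
      ∑ ω, p ω * V ω ≤ d + 1 / ((k : ℝ) + 1) := by
    intro k
    obtain ⟨V, β, hβ, hle⟩ := h (1 / ((k : ℝ) + 1)) (by positivity)
    obtain ⟨β', hβ', hmod⟩ := regularize v V β hβ Finset.univ
    exact ⟨V, β', hβ', fun i => hmod i (Finset.mem_univ i), hle⟩
  choose V β hok hmod hle using h'
  have hb : ∀ k, (∀ ω, |V k ω| ≤ B ω) ∧ ∀ i ω b, |β k i ω b| ≤ B ω := by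
    intro k
    refine hB (V k) (β k) (hok k) (hmod k) ((hle k).trans ?_)
    have : 1 / ((k : ℝ) + 1) ≤ 1 := by
      rw [div_le_one (by positivity)]
      have : (0 : ℝ) ≤ k := Nat.cast_nonneg k
      linarith
    linarith
  have lim : ∀ (f : ℕ → ℝ) (C : ℝ), (∀ k, |f k| ≤ C) →
      ∃ L, Tendsto f (hyperfilter ℕ : Filter ℕ) (𝓝 L) := by
    intro f C hf
    obtain ⟨L, -, hL⟩ := (isCompact_Icc (a := -C) (b := C)).ultrafilter_le_nhds'
      ((hyperfilter ℕ).map f) (by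
        rw [Ultrafilter.mem_map]
        exact Filter.Eventually.of_forall (fun k => abs_le.1 (hf k)))
    exact ⟨L, hL⟩
  choose V' hV' using fun ω => lim (fun k => V k ω) (B ω) (fun k => (hb k).1 ω)
  choose β' hβ' using fun i ω b => lim (fun k => β k i ω b) (B ω) (fun k => (hb k).2 i ω b)
  have hmod' : ∀ i, ModAt v β' i := by
    intro i ω a b c hc
    exact le_of_tendsto' ((hβ' i ω a).sub (hβ' i ω b)) fun k => hmod k i ω a b c hc
  refine ⟨V', β', ⟨fun ω x => ?_, fun i b => ?_⟩,
    fun i ω => modAt_continuous v hv β' i (hmod' i) ω, ?_⟩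
  · exact ge_of_tendsto' ((hV' ω).add (tendsto_finsetSum _ fun i _ => hβ' i ω (x i)))
      fun k => (hok k).1 ω x
  · exact le_of_tendsto' (tendsto_finsetSum _ fun ω _ => (hβ' i ω b).const_mul (b.1 ω))
      fun k => (hok k).2 i b
  · have h1 : Tendsto (fun k : ℕ => d + 1 / ((k : ℝ) + 1)) (hyperfilter ℕ : Filter ℕ)
        (𝓝 (d + 0)) :=
      (tendsto_one_div_add_atTop_nhds_zero_nat.mono_left Nat.hyperfilter_le_atTop).const_add d
    rw [add_zero] at h1
    exact le_of_tendsto_of_tendsto' (tendsto_finsetSum _ fun ω _ => (hV' ω).const_mul (p ω)) h1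
      hle

end DualPart

section HahnBanachPart

lemma riesz_pos {X : Type} [TopologicalSpace X] [CompactSpace X] [T2Space X] [MeasurableSpace X]
    [BorelSpace X] (L : C(X, ℝ) →ₗ[ℝ] ℝ) (hL : ∀ f : C(X, ℝ), (∀ x, 0 ≤ f x) → 0 ≤ L f) :
    ∃ ν : Measure X, IsFiniteMeasure ν ∧ ∀ f : C(X, ℝ), ∫ x, f x ∂ν = L f := by
  let L' : CompactlySupportedContinuousMap X ℝ →ₗ[ℝ] ℝ :=
    { toFun := fun f => L f.toContinuousMap
      map_add' := fun f g => by rw [← map_add]; rfl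
      map_smul' := fun c f => by rw [RingHom.id_apply, ← map_smul]; rfl }
  let Λ := PositiveLinearMap.mk₀ L' (fun f hf => hL _ fun x => CompactlySupportedContinuousMap.le_def.1 hf x)
  refine ⟨RealRMK.rieszMeasure Λ, inferInstance, fun f => ?_⟩
  have := RealRMK.integral_rieszMeasure Λ (CompactlySupportedContinuousMap.continuousMapEquiv f)
  exact this

variable {Ω : Type} [Fintype Ω]

/-- The Lagrangian term. -/
def Tf {n : ℕ} (α : Fin n → Ω → C(Belief Ω, ℝ)) (ω : Ω) : C(Fin n → Belief Ω, ℝ) where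
  toFun x := ∑ i, (α i ω (x i) - ∑ ω', (x i).1 ω' * α i ω' (x i))
  continuous_toFun := by
    refine continuous_finsetSum _ fun i _ => ?_
    refine ((α i ω).continuous.comp (continuous_apply i)).sub ?_
    refine continuous_finsetSum _ fun ω' _ => ?_
    refine Continuous.mul ?_ ((α i ω').continuous.comp (continuous_apply i))
    exact (continuous_apply ω').comp (continuous_subtype_val.comp (continuous_apply i))

lemma Tf_apply {n : ℕ} (α : Fin n → Ω → C(Belief Ω, ℝ)) (ω : Ω) (x : Fin n → Belief Ω) :
    Tf α ω x = ∑ i, (α i ω (x i) - ∑ ω', (x i).1 ω' * α i ω' (x i)) := rfl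

lemma Tf_add {n : ℕ} (α α' : Fin n → Ω → C(Belief Ω, ℝ)) (ω : Ω) (x : Fin n → Belief Ω) :
    Tf (α + α') ω x = Tf α ω x + Tf α' ω x := by
  simp only [Tf_apply, Pi.add_apply, ContinuousMap.add_apply, mul_add, Finset.sum_add_distrib,
    Finset.sum_sub_distrib]
  ring

lemma Tf_smul {n : ℕ} (c : ℝ) (α : Fin n → Ω → C(Belief Ω, ℝ)) (ω : Ω) (x : Fin n → Belief Ω) :
    Tf (c • α) ω x = c * Tf α ω x := by
  simp only [Tf_apply, Pi.smul_apply, ContinuousMap.smul_apply, smul_eq_mul, Finset.mul_sum,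
    mul_sub, mul_left_comm]

lemma Tf_zero {n : ℕ} (ω : Ω) (x : Fin n → Belief Ω) :
    Tf (0 : Fin n → Ω → C(Belief Ω, ℝ)) ω x = 0 := by
  simp [Tf_apply]

lemma Tf_avg_coord (α : Ω → C(Belief Ω, ℝ)) (b : Belief Ω) :
    ∑ ω, b.1 ω * (α ω b - ∑ ω', b.1 ω' * α ω' b) = 0 := by
  simp only [mul_sub, Finset.sum_sub_distrib, ← Finset.sum_mul]
  rw [b.2.2, one_mul, sub_self]

lemma Tf_avg {n : ℕ} (α : Fin n → Ω → C(Belief Ω, ℝ)) (b : Belief Ω) :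
    ∑ ω, b.1 ω * Tf α ω (fun _ => b) = 0 := by
  simp only [Tf_apply, Finset.mul_sum]
  rw [Finset.sum_comm]
  refine Finset.sum_eq_zero fun i _ => ?_
  have := Tf_avg_coord (α i) b
  simpa only [Finset.mul_sum] using this

/-- Values of the dual problem. -/
def dualSet (p : Ω → ℝ) {n : ℕ} (w : Ω → C(Fin n → Belief Ω, ℝ)) : Set ℝ :=
  { r | ∃ (V : Ω → ℝ) (α : Fin n → Ω → C(Belief Ω, ℝ)), r = ∑ ω, p ω * V ω ∧
    ∀ ω x, w ω x ≤ V ω + Tf α ω x }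

lemma dualSet_nonempty (p : Ω → ℝ) {n : ℕ} (w : Ω → C(Fin n → Belief Ω, ℝ)) :
    (dualSet p w).Nonempty := by
  refine ⟨_, fun ω => ‖w ω‖, 0, rfl, fun ω x => ?_⟩
  rw [Tf_zero, add_zero]
  exact (le_abs_self _).trans ((w ω).norm_coe_le_norm x)

lemma dualSet_bdd (p : Ω → ℝ) (hp : ∀ ω, 0 < p ω) (hpsum : ∑ ω, p ω = 1) {n : ℕ}
    (w : Ω → C(Fin n → Belief Ω, ℝ)) : BddBelow (dualSet p w) := by
  let b : Belief Ω := ⟨p, fun ω => (hp ω).le, hpsum⟩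
  refine ⟨∑ ω, p ω * w ω (fun _ => b), ?_⟩
  rintro r ⟨V, α, rfl, h⟩
  have h1 : ∑ ω, p ω * w ω (fun _ => b) ≤ ∑ ω, p ω * (V ω + Tf α ω (fun _ => b)) :=
    Finset.sum_le_sum fun ω _ => mul_le_mul_of_nonneg_left (h ω _) (hp ω).le
  have h2 := Tf_avg α b
  change ∑ ω, p ω * Tf α ω (fun _ => b) = 0 at h2
  simp only [mul_add, Finset.sum_add_distrib] at h1
  linarith

/-- The dual value as a sublinear functional. -/
noncomputable def dualVal (p : Ω → ℝ) {n : ℕ} (w : Ω → C(Fin n → Belief Ω, ℝ)) : ℝ :=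
  sInf (dualSet p w)

lemma dualVal_le (p : Ω → ℝ) (hp : ∀ ω, 0 < p ω) (hpsum : ∑ ω, p ω = 1) {n : ℕ}
    (w : Ω → C(Fin n → Belief Ω, ℝ)) (V : Ω → ℝ) (α : Fin n → Ω → C(Belief Ω, ℝ))
    (h : ∀ ω x, w ω x ≤ V ω + Tf α ω x) : dualVal p w ≤ ∑ ω, p ω * V ω :=
  csInf_le (dualSet_bdd p hp hpsum w) ⟨V, α, rfl, h⟩

lemma dualVal_exists (p : Ω → ℝ) {n : ℕ} (w : Ω → C(Fin n → Belief Ω, ℝ)) (ε : ℝ) (hε : 0 < ε) :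
    ∃ (V : Ω → ℝ) (α : Fin n → Ω → C(Belief Ω, ℝ)), ∑ ω, p ω * V ω < dualVal p w + ε ∧
      ∀ ω x, w ω x ≤ V ω + Tf α ω x := by
  obtain ⟨r, ⟨V, α, rfl, h⟩, hr⟩ := exists_lt_of_csInf_lt (dualSet_nonempty p w)
    (show sInf (dualSet p w) < dualVal p w + ε by unfold dualVal; linarith)
  exact ⟨V, α, hr, h⟩

lemma dualVal_add (p : Ω → ℝ) (hp : ∀ ω, 0 < p ω) (hpsum : ∑ ω, p ω = 1) {n : ℕ}
    (w w' : Ω → C(Fin n → Belief Ω, ℝ)) : dualVal p (w + w') ≤ dualVal p w + dualVal p w' := by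
  refine le_of_forall_pos_le_add fun ε hε => ?_
  obtain ⟨V, α, h1, h2⟩ := dualVal_exists p w (ε / 2) (by positivity)
  obtain ⟨V', α', h1', h2'⟩ := dualVal_exists p w' (ε / 2) (by positivity)
  have := dualVal_le p hp hpsum (w + w') (V + V') (α + α') (fun ω x => by
    rw [Tf_add]
    have a := h2 ω x
    have b := h2' ω x
    simp only [Pi.add_apply, ContinuousMap.add_apply]
    linarith)
  simp only [Pi.add_apply, mul_add, Finset.sum_add_distrib] at this
  linarith

lemma dualVal_smul_le (p : Ω → ℝ) (hp : ∀ ω, 0 < p ω) (hpsum : ∑ ω, p ω = 1) {n : ℕ}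
    (c : ℝ) (hc : 0 < c) (w : Ω → C(Fin n → Belief Ω, ℝ)) :
    dualVal p (c • w) ≤ c * dualVal p w := by
  refine le_of_forall_pos_le_add fun ε hε => ?_
  obtain ⟨V, α, h1, h2⟩ := dualVal_exists p w (ε / c) (by positivity)
  have := dualVal_le p hp hpsum (c • w) (c • V) (c • α) (fun ω x => by
    rw [Tf_smul]
    have a := mul_le_mul_of_nonneg_left (h2 ω x) hc.le
    simp only [Pi.smul_apply, ContinuousMap.smul_apply, smul_eq_mul]
    linarith)
  have e : ∑ ω, p ω * (c • V) ω = c * ∑ ω, p ω * V ω := by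
    simp only [Pi.smul_apply, smul_eq_mul, Finset.mul_sum, mul_left_comm]
  have h3 := mul_le_mul_of_nonneg_left h1.le hc.le
  rw [mul_add, mul_div_cancel₀ _ hc.ne'] at h3
  linarith

lemma dualVal_smul (p : Ω → ℝ) (hp : ∀ ω, 0 < p ω) (hpsum : ∑ ω, p ω = 1) {n : ℕ}
    (c : ℝ) (hc : 0 < c) (w : Ω → C(Fin n → Belief Ω, ℝ)) :
    dualVal p (c • w) = c * dualVal p w := by
  refine le_antisymm (dualVal_smul_le p hp hpsum c hc w) ?_
  have h := dualVal_smul_le p hp hpsum c⁻¹ (inv_pos.2 hc) (c • w)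
  rw [inv_smul_smul₀ hc.ne'] at h
  rwa [le_inv_mul_iff₀ hc] at h

lemma exists_support (p : Ω → ℝ) (hp : ∀ ω, 0 < p ω) (hpsum : ∑ ω, p ω = 1) {n : ℕ}
    (w : Ω → C(Fin n → Belief Ω, ℝ)) :
    ∃ g : (Ω → C(Fin n → Belief Ω, ℝ)) →ₗ[ℝ] ℝ, g w = dualVal p w ∧
      ∀ w', g w' ≤ dualVal p w' := by
  have N0 : dualVal p (0 : Ω → C(Fin n → Belief Ω, ℝ)) = 0 := by
    have := dualVal_smul p hp hpsum 2 two_pos (0 : Ω → C(Fin n → Belief Ω, ℝ))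
    rw [smul_zero] at this
    linarith
  let f := LinearPMap.mkSpanSingleton' (σ := RingHom.id ℝ) w (dualVal p w) (fun c hc => by
    rcases eq_or_ne c 0 with rfl | h
    · simp
    · rw [(smul_eq_zero.1 hc).resolve_left h, N0, smul_zero])
  obtain ⟨g, hg, hle⟩ := exists_extension_of_le_sublinear f (dualVal p)
    (fun c hc x => dualVal_smul p hp hpsum c hc x) (dualVal_add p hp hpsum) (by
      rintro ⟨x, hx⟩
      obtain ⟨c, rfl⟩ := Submodule.mem_span_singleton.1 hx
      rw [LinearPMap.mkSpanSingleton'_apply]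
      simp only [RingHom.id_apply, smul_eq_mul]
      rcases lt_trichotomy c 0 with h | rfl | h
      · have h1 := dualVal_add p hp hpsum (c • w) ((-c) • w)
        rw [← add_smul, add_neg_cancel, zero_smul, N0,
          dualVal_smul p hp hpsum (-c) (by linarith)] at h1
        linarith
      · simp [N0]
      · rw [dualVal_smul p hp hpsum c h])
  refine ⟨g, ?_, hle⟩
  have := hg ⟨w, Submodule.mem_span_singleton_self w⟩
  rw [this]
  exact LinearPMap.mkSpanSingleton'_apply_self _ _ _ _

variable [MeasurableSpace Ω] [MeasurableSingletonClass Ω]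

lemma integrable_of_cont {X : Type} [TopologicalSpace X] [CompactSpace X] [MeasurableSpace X]
    [OpensMeasurableSpace X] (ν : Measure X) [IsFiniteMeasure ν] (f : X → ℝ)
    (hf : Continuous f) : Integrable f ν := by
  obtain ⟨C, -, hC⟩ := exists_bound f hf
  exact Integrable.of_bound hf.measurable.aestronglyMeasurable C (ae_of_all _ hC)

/-- Existence of a feasible collection attaining the dual value. -/
lemma strong_duality (p : Ω → ℝ) (hp : ∀ ω, 0 < p ω) (hpsum : ∑ ω, p ω = 1) {n : ℕ}
    (w : Ω → C(Fin n → Belief Ω, ℝ)) :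
    ∃ μ, Feasible p n μ ∧ ∑ ω, p ω * ∫ x, w ω x ∂(μ ω) = dualVal p w := by
  classical
  obtain ⟨g, hgw, hle⟩ := exists_support p hp hpsum w
  have gneg : ∀ w', (∀ ω x, w' ω x ≤ 0) → g w' ≤ 0 := by
    intro w' h
    refine (hle w').trans ?_
    have := dualVal_le p hp hpsum w' 0 0 (fun ω x => by
      rw [Tf_zero]; simpa using h ω x)
    simpa using this
  have gpos : ∀ w', (∀ ω x, 0 ≤ w' ω x) → 0 ≤ g w' := by
    intro w' h
    have := gneg (-w') (fun ω x => by simpa using h ω x)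
    rw [map_neg] at this
    linarith
  have gconst1 : ∀ V : Ω → ℝ, g (fun ω => ContinuousMap.const _ (V ω)) ≤ ∑ ω, p ω * V ω := by
    intro V
    refine (hle _).trans (dualVal_le p hp hpsum _ V 0 (fun ω x => ?_))
    rw [Tf_zero]; simp
  have gconst : ∀ V : Ω → ℝ, g (fun ω => ContinuousMap.const _ (V ω)) = ∑ ω, p ω * V ω := by
    intro V
    refine le_antisymm (gconst1 V) ?_
    have h1 := gconst1 (-V)
    have h2 : (fun ω => ContinuousMap.const (Fin n → Belief Ω) ((-V) ω)) =
        -(fun ω => ContinuousMap.const (Fin n → Belief Ω) (V ω)) := by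
      ext; simp
    rw [h2, map_neg] at h1
    simp only [Pi.neg_apply, mul_neg, Finset.sum_neg_distrib] at h1
    linarith
  have gT1 : ∀ α : Fin n → Ω → C(Belief Ω, ℝ), g (Tf α) ≤ 0 := by
    intro α
    refine (hle _).trans ?_
    have := dualVal_le p hp hpsum (Tf α) 0 α (fun ω x => by simp)
    simpa using this
  have gT : ∀ α : Fin n → Ω → C(Belief Ω, ℝ), g (Tf α) = 0 := by
    intro α
    refine le_antisymm (gT1 α) ?_
    have h1 := gT1 ((-1 : ℝ) • α)
    have h2 : Tf ((-1 : ℝ) • α) = -Tf α := by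
      ext ω x
      rw [Tf_smul]; simp
    rw [h2, map_neg] at h1
    linarith
  have hν : ∀ ω, ∃ ν : Measure (Fin n → Belief Ω), IsFiniteMeasure ν ∧
      ∀ f : C(Fin n → Belief Ω, ℝ), ∫ x, f x ∂ν = g (Pi.single ω f) := by
    intro ω
    refine riesz_pos (g ∘ₗ LinearMap.single ℝ (fun _ : Ω => C(Fin n → Belief Ω, ℝ)) ω) ?_
    intro f hf
    refine gpos _ fun ω' x => ?_
    rcases eq_or_ne ω' ω with rfl | h
    · simpa using hf x
    · simp [h]
  choose ν hfin hint using hν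
  have hsum : ∀ w' : Ω → C(Fin n → Belief Ω, ℝ), g w' = ∑ ω, ∫ x, w' ω x ∂(ν ω) := by
    intro w'
    simp only [hint]
    rw [← map_sum, Finset.univ_sum_single]
  have hmass : ∀ ω, (ν ω) univ = ENNReal.ofReal (p ω) := by
    intro ω
    have h1 := hint ω (ContinuousMap.const _ 1)
    have h2 : (Pi.single ω (ContinuousMap.const _ 1) : Ω → C(Fin n → Belief Ω, ℝ)) =
        fun ω' => ContinuousMap.const _ ((Pi.single ω 1 : Ω → ℝ) ω') := by
      ext ω' x
      rcases eq_or_ne ω' ω with rfl | h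
      · simp
      · simp [h]
    rw [h2, gconst] at h1
    simp [Pi.single_apply] at h1
    rw [← h1, ofReal_measureReal]
  have hp0 : ∀ ω, ENNReal.ofReal (p ω) ≠ 0 := fun ω => by
    simpa using hp ω
  let μ : Ω → Measure (Fin n → Belief Ω) := fun ω => (ENNReal.ofReal (p ω))⁻¹ • ν ω
  have hμ : ∀ ω, IsProbabilityMeasure (μ ω) := by
    intro ω
    refine ⟨?_⟩
    simp only [μ, Measure.smul_apply, smul_eq_mul, hmass]
    exact ENNReal.inv_mul_cancel (hp0 ω) ENNReal.ofReal_ne_top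
  have hμint : ∀ ω (f : (Fin n → Belief Ω) → ℝ), p ω * ∫ x, f x ∂(μ ω) = ∫ x, f x ∂(ν ω) := by
    intro ω f
    simp only [μ]
    rw [integral_smul_measure, ENNReal.toReal_inv, ENNReal.toReal_ofReal (hp ω).le, smul_eq_mul,
      mul_inv_cancel_left₀ (hp ω).ne']
  refine ⟨μ, feasible_of_test p (fun ω => (hp ω).le) μ hμ ?_, ?_⟩
  · intro f hf i ω'
    simp only [hμint]
    let α : Fin n → Ω → C(Belief Ω, ℝ) := fun j ω => if j = i ∧ ω = ω' then ⟨f, hf⟩ else 0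
    have h1 := gT α
    rw [hsum] at h1
    have h2 : ∀ ω x, Tf α ω x = (if ω = ω' then f (x i) else 0) - f (x i) * (x i).1 ω' := by
      intro ω x
      rw [Tf_apply, Finset.sum_eq_single i]
      · congr 1
        · by_cases h : ω = ω' <;> simp [α, h]
        · rw [Finset.sum_eq_single ω']
          · simp [α, mul_comm]
          · intro ω'' _ h
            simp [α, h]
          · simp
      · intro j _ hj
        simp [α, hj]
      · simp
    have hc : Continuous fun x : Fin n → Belief Ω => f (x i) := hf.comp (continuous_apply i)
    have hc2 : Continuous fun x : Fin n → Belief Ω => f (x i) * (x i).1 ω' :=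
      hc.mul ((continuous_apply ω').comp (continuous_subtype_val.comp (continuous_apply i)))
    have h3 : ∀ ω, ∫ x, Tf α ω x ∂(ν ω) = (if ω = ω' then ∫ x, f (x i) ∂(ν ω) else 0) -
        ∫ x, f (x i) * (x i).1 ω' ∂(ν ω) := by
      intro ω
      simp only [h2]
      by_cases h : ω = ω'
      · simp only [h, if_true]
        exact integral_sub (integrable_of_cont _ _ hc) (integrable_of_cont _ _ hc2)
      · simp only [h, if_false, zero_sub, integral_neg]
    simp only [h3, Finset.sum_sub_distrib, Finset.sum_ite_eq', Finset.mem_univ, if_true] at h1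
    linarith
  · simp only [hμint]
    rw [← hsum, hgw]

lemma weak_duality (q : Ω → ℝ) (hq : ∀ ω, 0 ≤ q ω) {n : ℕ} (μ : Ω → Measure (Fin n → Belief Ω))
    (h : Feasible q n μ) (α : Fin n → Ω → C(Belief Ω, ℝ)) :
    ∑ ω, q ω * ∫ x, Tf α ω x ∂(μ ω) = 0 := by
  have hμ := h.1
  have hc : ∀ i ω, Continuous fun x : Fin n → Belief Ω => α i ω (x i) :=
    fun i ω => (α i ω).continuous.comp (continuous_apply i)
  have hc2 : ∀ i ω', Continuous fun x : Fin n → Belief Ω => (x i).1 ω' * α i ω' (x i) := by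
    intro i ω'
    refine Continuous.mul ?_ (hc i ω')
    exact (continuous_apply ω').comp (continuous_subtype_val.comp (continuous_apply i))
  have h1 : ∀ ω, ∫ x, Tf α ω x ∂(μ ω) = ∑ i, (∫ x, α i ω (x i) ∂(μ ω) -
      ∑ ω', ∫ x, (x i).1 ω' * α i ω' (x i) ∂(μ ω)) := by
    intro ω
    simp only [Tf_apply]
    rw [integral_finsetSum]
    · refine Finset.sum_congr rfl fun i _ => ?_
      rw [integral_sub (integrable_of_cont _ _ (hc i ω))
        (integrable_of_cont _ _ (continuous_finsetSum _ fun ω' _ => hc2 i ω')),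
        integral_finsetSum]
      exact fun ω' _ => integrable_of_cont _ _ (hc2 i ω')
    · exact fun i _ => integrable_of_cont _ _
        ((hc i ω).sub (continuous_finsetSum _ fun ω' _ => hc2 i ω'))
  simp only [h1, Finset.mul_sum]
  rw [Finset.sum_comm]
  refine Finset.sum_eq_zero fun i _ => ?_
  simp only [mul_sub, Finset.sum_sub_distrib, Finset.mul_sum]
  rw [sub_eq_zero, Finset.sum_comm]
  refine Finset.sum_congr rfl fun ω' _ => ?_
  rw [← feasible_test q hq μ h (α i ω') (α i ω').continuous i ω']
  simp only [mul_comm]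

end HahnBanachPart

/-- the multi-receiver analog of the concavification formula
(equation `eq_analog_cavU`): the value equals the minimum of the non-revealing value
over dominating utilities for which revealing no information is optimal at any prior. -/
theorem value_eq_min_over_nonrevealing_optimal_dominating_utilities
    {Ω : Type} [Fintype Ω] [Nonempty Ω] [MeasurableSpace Ω] [MeasurableSingletonClass Ω]
    (p : Ω → ℝ) (hp : ∀ ω, 0 < p ω) (hpsum : ∑ ω : Ω, p ω = 1)
    (n : ℕ) (hn : 1 ≤ n)
    (v : Ω → (Fin n → Belief Ω) → ℝ)
    (hv : ∀ ω, Continuous (v ω)) :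
    IsLeast
      { r : ℝ | ∃ u : Ω → (Fin n → Belief Ω) → ℝ,
        (∀ ω, Continuous (u ω)) ∧
        (∀ (ω : Ω) (x : Fin n → Belief Ω), v ω x ≤ u ω x) ∧
        -- non-revealing is optimal under `u` for any (full-support) prior:
        (∀ (q : Ω → ℝ) (hq : ∀ ω, 0 < q ω) (hqs : ∑ ω : Ω, q ω = 1),
          ∀ μ : Ω → Measure (Fin n → Belief Ω), Feasible q n μ →
            ∑ ω : Ω, q ω * ∫ x, u ω x ∂(μ ω) ≤
              ∑ ω : Ω, q ω * u ω (fun _ : Fin n =>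
                (⟨q, ⟨fun ω' => (hq ω').le, hqs⟩⟩ : Belief Ω))) ∧
        r = ∑ ω : Ω, p ω * u ω (fun _ : Fin n =>
          (⟨p, ⟨fun ω' => (hp ω').le, hpsum⟩⟩ : Belief Ω)) }
      (Val p n v) := by
  let w : Ω → C(Fin n → Belief Ω, ℝ) := fun ω => ⟨v ω, hv ω⟩
  obtain ⟨μ₀, hμ₀, hval₀⟩ := strong_duality p hp hpsum w
  have hval₁ : ∑ ω, p ω * ∫ x, v ω x ∂(μ₀ ω) = dualVal p w := hval₀
  obtain ⟨V, β, hok, hcont, hle⟩ := dual_attain p hp hpsum v hv (dualVal p w) (by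
    intro ε hε
    obtain ⟨V, α, h1, h2⟩ := dualVal_exists p w ε hε
    refine ⟨V, fun i ω b => α i ω b - ∑ ω', b.1 ω' * α i ω' b, ⟨fun ω x => h2 ω x, fun i b => ?_⟩,
      h1.le⟩
    exact (Tf_avg_coord (α i) b).le)
  let α : Fin n → Ω → C(Belief Ω, ℝ) := fun i ω => ⟨β i ω, hcont i ω⟩
  have hTval : ∀ (q : Ω → ℝ), (∀ ω, 0 ≤ q ω) → ∀ μ : Ω → Measure (Fin n → Belief Ω),
      Feasible q n μ → ∑ ω, q ω * ∫ x, (V ω + Tf α ω x) ∂(μ ω) = ∑ ω, q ω * V ω := by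
    intro q hq μ hμ
    have hprob := hμ.1
    have h1 := weak_duality q hq μ hμ α
    have h2 : ∀ ω, ∫ x, (V ω + Tf α ω x) ∂(μ ω) = V ω + ∫ x, Tf α ω x ∂(μ ω) := by
      intro ω
      rw [integral_add (integrable_const _) (integrable_of_cont _ _ (Tf α ω).continuous)]
      simp
    simp only [h2, mul_add, Finset.sum_add_distrib, h1, add_zero]
  have hdom : ∀ ω x, v ω x ≤ V ω + Tf α ω x := by
    intro ω x
    refine (hok.1 ω x).trans ?_
    rw [Tf_apply]
    have : ∑ i, β i ω (x i) ≤ ∑ i, (α i ω (x i) - ∑ ω', (x i).1 ω' * α i ω' (x i)) := by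
      refine Finset.sum_le_sum fun i _ => ?_
      have h3 : ∑ ω', (x i).1 ω' * α i ω' (x i) ≤ 0 := hok.2 i (x i)
      have h4 : α i ω (x i) = β i ω (x i) := rfl
      linarith
    linarith
  have hmono : ∀ (u : Ω → (Fin n → Belief Ω) → ℝ), (∀ ω, Continuous (u ω)) →
      (∀ ω x, v ω x ≤ u ω x) → ∀ μ : Ω → Measure (Fin n → Belief Ω), Feasible p n μ →
      ∑ ω, p ω * ∫ x, v ω x ∂(μ ω) ≤ ∑ ω, p ω * ∫ x, u ω x ∂(μ ω) := by
    intro u hu hvu μ hμ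
    have hprob := hμ.1
    refine Finset.sum_le_sum fun ω _ => mul_le_mul_of_nonneg_left ?_ (hp ω).le
    exact integral_mono (integrable_of_cont _ _ (hv ω)) (integrable_of_cont _ _ (hu ω)) (hvu ω)
  have hucont : ∀ ω, Continuous fun x => V ω + Tf α ω x :=
    fun ω => continuous_const.add (Tf α ω).continuous
  have hnr : ∀ (q : Ω → ℝ) (hq : ∀ ω, 0 < q ω) (hqs : ∑ ω, q ω = 1),
      ∑ ω, q ω * (V ω + Tf α ω (fun _ => (⟨q, ⟨fun ω' => (hq ω').le, hqs⟩⟩ : Belief Ω))) =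
        ∑ ω, q ω * V ω := by
    intro q hq hqs
    have h1 := Tf_avg α (⟨q, ⟨fun ω' => (hq ω').le, hqs⟩⟩ : Belief Ω)
    simp only [mul_add, Finset.sum_add_distrib]
    rw [h1, add_zero]
  have hweak : ∀ μ : Ω → Measure (Fin n → Belief Ω), Feasible p n μ →
      ∑ ω, p ω * ∫ x, v ω x ∂(μ ω) ≤ ∑ ω, p ω * V ω := by
    intro μ hμ
    have h1 := hmono _ hucont hdom μ hμ
    rwa [hTval p (fun ω => (hp ω).le) μ hμ] at h1
  have hVeq : ∑ ω, p ω * V ω = dualVal p w := by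
    refine le_antisymm hle ?_
    rw [← hval₁]
    exact hweak μ₀ hμ₀
  have hgreat : IsGreatest { r | ∃ μ : Ω → Measure (Fin n → Belief Ω),
      Feasible p n μ ∧ r = ∑ ω : Ω, p ω * ∫ x, v ω x ∂(μ ω) } (dualVal p w) := by
    refine ⟨⟨μ₀, hμ₀, hval₁.symm⟩, ?_⟩
    rintro r ⟨μ, hμ, rfl⟩
    rw [← hVeq]
    exact hweak μ hμ
  have hVal : Val p n v = dualVal p w := hgreat.csSup_eq
  rw [hVal]
  constructor
  · refine ⟨fun ω x => V ω + Tf α ω x, hucont, hdom, ?_, ?_⟩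
    · intro q hq hqs μ hμ
      rw [hTval q (fun ω => (hq ω).le) μ hμ, hnr q hq hqs]
    · rw [hnr p hp hpsum, hVeq]
  · rintro r ⟨u, hu, hvu, hopt, rfl⟩
    rw [← hval₁]
    exact (hmono u hu hvu μ₀ hμ₀).trans (hopt p hp hpsum μ₀ hμ₀)
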